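/- If A and B are positive self-adjoint bounded operators on a Hilbert space and r ∈ (0,1], then ‖A^r − B^r‖ ≤ ‖A − B‖^r. -/

import Mathlib

set_option synthInstance.maxHeartbeats 1000000
set_option maxHeartbeats 1000000

open scoped NNReal

/-- Subadditivity of the fractional power against a nonnegative scalar. -/
lemma CFC.rpow_add_algebraMap_le {E : Type*} [CStarAlgebra E] [PartialOrder E] [StarOrderedRing E]
    {b : E} (hb : 0 ≤ b) (c : ℝ≥0) {r : ℝ} (hr0 : 0 < r) (hr1 : r ≤ 1) :
    CFC.rpow (b + algebraMap ℝ≥0 E c) r ≤ CFC.rpow b r + algebraMap ℝ≥0 E (c ^ r) := by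
  have hcont : Continuous fun x : ℝ≥0 ↦ x ^ r := NNReal.continuous_rpow_const hr0.le
  have hadd : b + algebraMap ℝ≥0 E c = cfc (fun x : ℝ≥0 ↦ x + c) b := by
    rw [cfc_add_const c (fun x : ℝ≥0 ↦ x) b, cfc_id' ℝ≥0 b]
  unfold CFC.rpow
  rw [hadd, ← cfc_comp' (fun x : ℝ≥0 ↦ x ^ r) (fun x : ℝ≥0 ↦ x + c) b hcont.continuousOn,
    ← cfc_add_const (c ^ r) (fun x : ℝ≥0 ↦ x ^ r) b hcont.continuousOn]
  refine cfc_mono (fun x _ ↦ NNReal.rpow_add_le_add_rpow x c hr0.le hr1) ?_ ?_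
  · exact (hcont.comp (continuous_id.add continuous_const)).continuousOn
  · exact (hcont.add continuous_const).continuousOn

/-- One-sided operator Hölder estimate for fractional powers. -/
lemma CFC.rpow_sub_rpow_le {E : Type*} [CStarAlgebra E] [PartialOrder E] [StarOrderedRing E]
    {a b : E} (ha : 0 ≤ a) (hb : 0 ≤ b) {r : ℝ} (hr0 : 0 < r) (hr1 : r ≤ 1) :
    CFC.rpow a r - CFC.rpow b r ≤ algebraMap ℝ E (‖a - b‖ ^ r) := by
  have hab : a ≤ b + algebraMap ℝ≥0 E ‖a - b‖₊ := by
    have hsa : IsSelfAdjoint (a - b) := (IsSelfAdjoint.of_nonneg ha).sub (.of_nonneg hb)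
    have h := hsa.le_algebraMap_norm_self
    rw [sub_le_iff_le_add'] at h
    exact h
  rw [sub_le_iff_le_add']
  exact (CFC.rpow_le_rpow ⟨hr0.le, hr1⟩ hab).trans (CFC.rpow_add_algebraMap_le hb _ hr0 hr1)

/-- If `A`, `B` are positive self-adjoint bounded operators on a Hilbert space and `r ∈ (0,1]`,
then `‖A^r − B^r‖ ≤ ‖A − B‖^r`. -/
theorem stmt_9 {H : Type*} [NormedAddCommGroup H] [InnerProductSpace ℂ H] [CompleteSpace H]
    (A B : H →L[ℂ] H) (hA : 0 ≤ A) (hB : 0 ≤ B) (r : ℝ) (hr0 : 0 < r) (hr1 : r ≤ 1) :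
    ‖CFC.rpow A r - CFC.rpow B r‖ ≤ ‖A - B‖ ^ r := by
  have hsa : IsSelfAdjoint (CFC.rpow A r - CFC.rpow B r) :=
    (IsSelfAdjoint.of_nonneg CFC.rpow_nonneg).sub (.of_nonneg CFC.rpow_nonneg)
  have hupper := CFC.rpow_sub_rpow_le hA hB hr0 hr1
  have hlower := CFC.rpow_sub_rpow_le hB hA hr0 hr1
  rw [norm_sub_rev B A, ← neg_sub, neg_le, ← map_neg] at hlower
  rw [le_algebraMap_iff_spectrum_le] at hupper
  rw [algebraMap_le_iff_le_spectrum] at hlower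
  rw [← cfc_id' ℝ (CFC.rpow A r - CFC.rpow B r)]
  exact norm_cfc_le (by positivity) fun x hx ↦ abs_le.2 ⟨hlower x hx, hupper x hx⟩
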